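/- Let t > 0 and s, d ∈ ℝ, and set x := s − d, a := s + d. Assume p(t,x) < a < −|x| (this forces |x| < t). Then Δ := t² + x² + 2ta > 0 and z⋆ := (t + s − d − √Δ)/t = (t + x − √Δ)/t lies in the open interval (0, 2). Moreover, defining Φ(θ) := s·Log(2 − z⋆e^{iθ}) − d·Log(z⋆e^{iθ}) + (t/2)(1 − z⋆e^{iθ}) for θ ∈ (−π, π), where Log is the principal complex logarithm: Φ′(0) = 0; Φ″(0) is a strictly positive real number; and the function θ ↦ Re Φ(θ) extends continuously to [−π, π], is an even function of θ, and is strictly increasing on [0, π]. -/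

import Mathlib

/-!
The numerator of `Φ'(w) = -s/(2 - w) - d/w - t/2` is a quadratic polynomial in `w`. Let `p` and `q`
be its roots; its values at `0` and `2` give `t p q = -4 d` and `t (2 - p) (2 - q) = -4 s`.
Both right-hand sides are positive exactly when `s + d < -|s - d|`, and together with
`|s - d| < t` this puts real roots in `(0, 2)`; the parabola condition makes them real and distinct,
`p < q`.

Along `w = p e^{iθ}` the chain rule gives `dΦ/dθ = i t (w - p) (w - q) / (2 (2 - w))`, which
vanishes at `θ = 0` and has derivative `t p (q - p) / (2 (2 - p)) > 0` there. On the other hand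
`d(Re Φ)/dθ = (p sin θ / 2) (t + 4 s / |2 - w|²)`, and the bracket is positive because
`t |2 - w|² + 4 s ≥ t (2 - p)² + 4 s = t (2 - p) (q - p)`.
-/

open Real

/-- The (shifted) parabola `p(t,x)`: for `t > 0`, `p(t,x) = -t/2 - x²/(2t)` when `|x| ≤ t`
and `p(t,x) = -|x|` otherwise; also `p(0,x) = -|x|`. -/
noncomputable def parab (t x : ℝ) : ℝ :=
  if 0 < t ∧ |x| ≤ t then -t / 2 - x ^ 2 / (2 * t) else -|x|

lemma abs_lt_of_parab_lt {t x a : ℝ} (hpa : parab t x < a) (hax : a < -|x|) : |x| < t := by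
  unfold parab at hpa
  split_ifs at hpa with h
  · obtain ⟨ht, hxt⟩ := h
    refine lt_of_le_of_ne hxt fun hxt_eq => ?_
    have hparab : -t / 2 - x ^ 2 / (2 * t) = -|x| := by
      rw [← sq_abs x, hxt_eq]
      field_simp
      ring
    linarith
  · linarith

lemma discr_pos_of_parab_lt {t x a : ℝ} (hpa : parab t x < a) (hax : a < -|x|) :
    0 < t ^ 2 + x ^ 2 + 2 * t * a := by
  have hxt : |x| < t := abs_lt_of_parab_lt hpa hax
  have ht : 0 < t := (abs_nonneg x).trans_lt hxt
  rw [parab, if_pos ⟨ht, hxt.le⟩] at hpa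
  calc 0 < 2 * t * (a - (-t / 2 - x ^ 2 / (2 * t))) := by
        have := sub_pos.2 hpa
        positivity
    _ = t ^ 2 + x ^ 2 + 2 * t * a := by
        field_simp
        ring

lemma pos_of_mul_pos_of_add_pos {α : Type*} [Ring α] [LinearOrder α] [IsStrictOrderedRing α]
    {a b : α} (hmul : 0 < a * b) (hadd : 0 < a + b) : 0 < a := by
  rcases mul_pos_iff.1 hmul with ⟨ha, -⟩ | ⟨ha, hb⟩
  · exact ha
  · exact absurd hadd (add_neg ha hb).not_gt

lemma ofReal_sub_mem_slitPlane {r : ℝ} {w : ℂ} (hw : ‖w‖ < r) : r - w ∈ Complex.slitPlane := by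
  have hre : 0 < (r - w).re := by
    rw [Complex.sub_re, Complex.ofReal_re]
    linarith [Complex.re_le_norm w]
  exact Or.inl hre

lemma circleMap_zero_mem_slitPlane {R : ℝ} (hR : 0 < R) : circleMap 0 R 0 ∈ Complex.slitPlane := by
  simpa [circleMap] using hR

lemma norm_ofReal_sub_circleMap_sq (a R θ : ℝ) :
    ‖a - circleMap 0 R θ‖ ^ 2 = a ^ 2 + R ^ 2 - 2 * a * R * cos θ := by
  rw [Complex.sq_norm, Complex.normSq_apply, Complex.sub_re, Complex.sub_im, circleMap_zero_re,
    circleMap_zero_im, Complex.ofReal_re, Complex.ofReal_im]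
  linear_combination R ^ 2 * sin_sq_add_cos_sq θ

lemma norm_two_sub_circleMap_sq (R θ : ℝ) :
    ‖2 - circleMap 0 R θ‖ ^ 2 = 4 + R ^ 2 - 4 * R * cos θ := by
  have h := norm_ofReal_sub_circleMap_sq 2 R θ
  norm_num at h
  exact h

lemma norm_sub_abs_le_norm_sub_circleMap (a : ℂ) (R θ : ℝ) :
    ‖a‖ - |R| ≤ ‖a - circleMap 0 R θ‖ := by
  simpa only [norm_circleMap_zero] using norm_sub_norm_le a (circleMap 0 R θ)

lemma norm_two_sub_circleMap_pos {R : ℝ} (hR : |R| < 2) (θ : ℝ) : 0 < ‖2 - circleMap 0 R θ‖ := by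
  have h := norm_sub_abs_le_norm_sub_circleMap 2 R θ
  rw [Complex.norm_ofNat] at h
  exact (sub_pos.2 hR).trans_le h

/-- `p` and `q` are the two roots of the numerator `t w² - 2 (t + s - d) w - 4 d` of the derivative
of `leftExponent t s d`, encoded by the values of this quadratic polynomial at `0` and `2`. -/
structure IsCriticalPair (t s d p q : ℝ) : Prop where
  mul_mul : t * (p * q) = -4 * d
  mul_two_sub_mul_two_sub : t * ((2 - p) * (2 - q)) = -4 * s

/-- The exponent `Φ^◁(w; t, s, d)` as a function of the complex variable `w`, with principal
logarithms. -/
noncomputable def leftExponent (t s d : ℝ) (w : ℂ) : ℂ :=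
  s * Complex.log (2 - w) - d * Complex.log w + t / 2 * (1 - w)

section

variable {t s d p q : ℝ}

lemma isCriticalPair_of_sq_eq {r : ℝ} (ht : t ≠ 0)
    (hr : r ^ 2 = t ^ 2 + (s - d) ^ 2 + 2 * t * (s + d)) :
    IsCriticalPair t s d ((t + (s - d) - r) / t) ((t + (s - d) + r) / t) where
  mul_mul := by
    field_simp
    linear_combination -hr
  mul_two_sub_mul_two_sub := by
    field_simp
    linear_combination -hr

lemma IsCriticalPair.mul_add (h : IsCriticalPair t s d p q) :
    t * (p + q) = 2 * (t + (s - d)) := by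
  linear_combination (h.mul_mul - h.mul_two_sub_mul_two_sub) / 2

lemma IsCriticalPair.mem_Ioo (h : IsCriticalPair t s d p q) (hxt : |s - d| < t)
    (hax : s + d < -|s - d|) : p ∈ Set.Ioo 0 2 := by
  have ht : 0 < t := (abs_nonneg _).trans_lt hxt
  obtain ⟨hx_lower, hx_upper⟩ := abs_lt.1 hxt
  have hs : s < 0 := by linarith [le_abs_self (s - d)]
  have hd : d < 0 := by linarith [neg_abs_le (s - d)]
  have hsum := h.mul_add
  constructor
  · have hmul : 0 < p * q := pos_of_mul_pos_right (by linarith [h.mul_mul]) ht.le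
    have hadd : 0 < p + q := pos_of_mul_pos_right (by linarith) ht.le
    exact pos_of_mul_pos_of_add_pos hmul hadd
  · have hmul : 0 < (2 - p) * (2 - q) :=
      pos_of_mul_pos_right (by linarith [h.mul_two_sub_mul_two_sub]) ht.le
    have hadd : 0 < (2 - p) + (2 - q) := pos_of_mul_pos_right (by linarith) ht.le
    exact sub_pos.1 (pos_of_mul_pos_of_add_pos hmul hadd)

lemma IsCriticalPair.mul_two_sub_sq_add_pos (h : IsCriticalPair t s d p q) (ht : 0 < t)
    (hp : p < 2) (hpq : p < q) : 0 < t * (2 - p) ^ 2 + 4 * s := by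
  have hfactor : t * (2 - p) ^ 2 + 4 * s = t * (2 - p) * (q - p) := by
    linear_combination h.mul_two_sub_mul_two_sub
  rw [hfactor]
  exact mul_pos (mul_pos ht (sub_pos.2 hp)) (sub_pos.2 hpq)

lemma hasDerivAt_leftExponent {w : ℂ} (hw : w ∈ Complex.slitPlane)
    (hw' : 2 - w ∈ Complex.slitPlane) :
    HasDerivAt (leftExponent t s d) (-s / (2 - w) - d / w - t / 2) w := by
  have hlog := (((hasDerivAt_id w).const_sub 2).clog hw').const_mul (s : ℂ)
  have hlog' := ((hasDerivAt_id w).clog hw).const_mul (d : ℂ)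
  have hlin := ((hasDerivAt_id w).const_sub 1).const_mul (t / 2 : ℂ)
  refine ((hlog.sub hlog').add hlin).congr_deriv ?_
  simp only [id]
  ring

lemma IsCriticalPair.deriv_leftExponent_mul (h : IsCriticalPair t s d p q) {w : ℂ}
    (hw : w ∈ Complex.slitPlane) (hw' : 2 - w ∈ Complex.slitPlane) :
    deriv (leftExponent t s d) w * w = (w - p) * (t * (w - q) / (2 * (2 - w))) := by
  have hmul : (t : ℂ) * (p * q) = -4 * d := mod_cast h.mul_mul
  have hadd : (t : ℂ) * (p + q) = 2 * (t + (s - d)) := mod_cast h.mul_add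
  have hw_ne := Complex.slitPlane_ne_zero hw
  have hw_ne' := Complex.slitPlane_ne_zero hw'
  rw [(hasDerivAt_leftExponent hw hw').deriv]
  field_simp
  linear_combination w * hadd - hmul

lemma IsCriticalPair.hasDerivAt_leftExponent_circleMap (h : IsCriticalPair t s d p q) {R θ : ℝ}
    (hw : circleMap 0 R θ ∈ Complex.slitPlane) (hR : |R| < 2) :
    HasDerivAt (fun θ => leftExponent t s d (circleMap 0 R θ))
      ((circleMap 0 R θ - p) * (t * (circleMap 0 R θ - q) / (2 * (2 - circleMap 0 R θ)))
        * Complex.I) θ := by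
  have hw' : 2 - circleMap 0 R θ ∈ Complex.slitPlane := by
    simpa using ofReal_sub_mem_slitPlane (r := 2) (by rwa [norm_circleMap_zero])
  rw [← h.deriv_leftExponent_mul hw hw', mul_assoc]
  exact (hasDerivAt_leftExponent hw hw').differentiableAt.hasDerivAt.comp θ
    (hasDerivAt_circleMap 0 R θ)

lemma IsCriticalPair.deriv_leftExponent_circleMap (h : IsCriticalPair t s d p q)
    (hp : p ∈ Set.Ioo 0 2) : deriv (fun θ => leftExponent t s d (circleMap 0 p θ)) 0 = 0 := by
  have hp_abs : |p| < 2 := (abs_of_pos hp.1).trans_lt hp.2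
  rw [(h.hasDerivAt_leftExponent_circleMap (circleMap_zero_mem_slitPlane hp.1) hp_abs).deriv]
  simp [circleMap]

lemma IsCriticalPair.deriv_deriv_leftExponent_circleMap (h : IsCriticalPair t s d p q)
    (hp : p ∈ Set.Ioo 0 2) :
    deriv (deriv fun θ => leftExponent t s d (circleMap 0 p θ)) 0 =
      ((t * p * (q - p) / (2 * (2 - p)) : ℝ) : ℂ) := by
  have hp_abs : |p| < 2 := (abs_of_pos hp.1).trans_lt hp.2
  have hp_ne : (2 : ℂ) - p ≠ 0 := mod_cast (sub_pos.2 hp.2).ne'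
  have hcircle_zero : circleMap 0 p 0 = p := by simp [circleMap]
  have hcircle : HasDerivAt (circleMap 0 p) (p * Complex.I) 0 := by
    simpa only [hcircle_zero] using hasDerivAt_circleMap 0 p 0
  have hslit : ∀ᶠ θ in nhds 0, circleMap 0 p θ ∈ Complex.slitPlane :=
    (continuous_circleMap 0 p).continuousAt.eventually_mem
      (Complex.isOpen_slitPlane.mem_nhds (circleMap_zero_mem_slitPlane hp.1))
  have hderiv := hslit.mono fun θ hθ => (h.hasDerivAt_leftExponent_circleMap hθ hp_abs).deriv
  have hquot := ((hcircle.sub_const (q : ℂ)).const_mul (t : ℂ)).fun_div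
    ((hcircle.const_sub 2).const_mul 2) (by simpa [hcircle_zero] using hp_ne)
  rw [Filter.EventuallyEq.deriv_eq hderiv,
    (((hcircle.sub_const (p : ℂ)).fun_mul hquot).mul_const Complex.I).deriv]
  -- The term containing the derivative of the quotient drops out, as `circleMap 0 p 0 - p = 0`.
  simp only [hcircle_zero, sub_self, zero_mul, add_zero]
  push_cast
  linear_combination (p * (t * (p - q) / (2 * (2 - p))) : ℂ) * Complex.I_sq

end

lemma re_leftExponent_circleMap (t s d R θ : ℝ) :
    (leftExponent t s d (circleMap 0 R θ)).re =
      s / 2 * log (4 + R ^ 2 - 4 * R * cos θ) - d * log R + t / 2 * (1 - R * cos θ) := by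
  have ht : (t / 2 : ℂ) = ((t / 2 : ℝ) : ℂ) := by push_cast; rfl
  rw [leftExponent, ht, Complex.add_re, Complex.sub_re, Complex.re_ofReal_mul,
    Complex.re_ofReal_mul, Complex.re_ofReal_mul, Complex.log_re, Complex.log_re,
    norm_circleMap_zero, log_abs, Complex.sub_re, Complex.one_re, circleMap_zero_re,
    ← norm_two_sub_circleMap_sq, log_pow]
  push_cast
  ring

lemma re_leftExponent_circleMap_neg (t s d R θ : ℝ) :
    (leftExponent t s d (circleMap 0 R (-θ))).re = (leftExponent t s d (circleMap 0 R θ)).re := by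
  rw [re_leftExponent_circleMap, re_leftExponent_circleMap, cos_neg]

section

variable {t s d R : ℝ}

lemma hasDerivAt_re_leftExponent_circleMap (hR : |R| < 2) (θ : ℝ) :
    HasDerivAt (fun θ => (leftExponent t s d (circleMap 0 R θ)).re)
      (R * sin θ / 2 * (t + 4 * s / ‖2 - circleMap 0 R θ‖ ^ 2)) θ := by
  have hne : 4 + R ^ 2 - 4 * R * cos θ ≠ 0 := by
    rw [← norm_two_sub_circleMap_sq]
    exact (pow_pos (norm_two_sub_circleMap_pos hR θ) 2).ne'
  have hlog := ((((hasDerivAt_cos θ).const_mul (4 * R)).const_sub (4 + R ^ 2)).log hne).const_mul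
    (s / 2)
  have hlin := (((hasDerivAt_cos θ).const_mul R).const_sub 1).const_mul (t / 2)
  simp only [re_leftExponent_circleMap, norm_two_sub_circleMap_sq]
  refine ((hlog.sub_const (d * log R)).add hlin).congr_deriv ?_
  ring

lemma continuous_re_leftExponent_circleMap (hR : |R| < 2) :
    Continuous fun θ => (leftExponent t s d (circleMap 0 R θ)).re :=
  continuous_iff_continuousAt.2 fun θ => (hasDerivAt_re_leftExponent_circleMap hR θ).continuousAt

lemma strictMonoOn_re_leftExponent_circleMap (ht : 0 ≤ t) (hR : R ∈ Set.Ioo 0 2)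
    (hpos : 0 < t * (2 - R) ^ 2 + 4 * s) :
    StrictMonoOn (fun θ => (leftExponent t s d (circleMap 0 R θ)).re) (Set.Icc 0 π) := by
  have hR_abs : |R| < 2 := (abs_of_pos hR.1).trans_lt hR.2
  refine strictMonoOn_of_deriv_pos (convex_Icc 0 π)
    (continuous_re_leftExponent_circleMap hR_abs).continuousOn fun θ hθ => ?_
  rw [interior_Icc] at hθ
  rw [(hasDerivAt_re_leftExponent_circleMap hR_abs θ).deriv]
  have hle : 2 - R ≤ ‖2 - circleMap 0 R θ‖ := by
    simpa only [abs_of_pos hR.1, Complex.norm_ofNat] using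
      norm_sub_abs_le_norm_sub_circleMap 2 R θ
  have hR_sub : 0 < 2 - R := sub_pos.2 hR.2
  have hnorm := norm_two_sub_circleMap_pos hR_abs θ
  have hbracket : 0 < t + 4 * s / ‖2 - circleMap 0 R θ‖ ^ 2 := by
    rw [← mul_pos_iff_of_pos_right (pow_pos hnorm 2), add_mul,
      div_mul_cancel₀ _ (pow_pos hnorm 2).ne']
    calc 0 < t * (2 - R) ^ 2 + 4 * s := hpos
      _ ≤ t * ‖2 - circleMap 0 R θ‖ ^ 2 + 4 * s := by gcongr
  exact mul_pos (half_pos (mul_pos hR.1 (sin_pos_of_mem_Ioo hθ))) hbracket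

end

/-- Lemma C.1 (l.steep), case `Φ = Φ^◁`: with `x = s − d`, `a = s + d` and
`p(t,x) < a < −|x|`, the discriminant `Δ = t² + x² + 2ta` is positive, the critical point
`z⋆ = (t + x − √Δ)/t` lies in `(0,2)`, and the exponent
`Φ(θ) = s·Log(2 − z⋆e^{iθ}) − d·Log(z⋆e^{iθ}) + (t/2)(1 − z⋆e^{iθ})` has a critical point
at `θ = 0` with positive second derivative, while `Re Φ` is even, extends continuously to
`[−π, π]`, and is strictly increasing on `[0, π]`. -/
theorem steepest_descent_left (t s d : ℝ) (ht : 0 < t)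
    (h1 : parab t (s - d) < s + d) (h2 : s + d < -|s - d|) :
    let Δ : ℝ := t ^ 2 + (s - d) ^ 2 + 2 * t * (s + d)
    let z : ℝ := (t + (s - d) - Real.sqrt Δ) / t
    let Φ : ℝ → ℂ := fun θ =>
      (s : ℂ) * Complex.log (2 - (z : ℂ) * Complex.exp (θ * Complex.I)) -
        (d : ℂ) * Complex.log ((z : ℂ) * Complex.exp (θ * Complex.I)) +
        (t / 2 : ℂ) * (1 - (z : ℂ) * Complex.exp (θ * Complex.I))
    0 < Δ ∧ z ∈ Set.Ioo (0 : ℝ) 2 ∧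
      deriv Φ 0 = 0 ∧
      ((deriv (deriv Φ) 0).im = 0 ∧ 0 < (deriv (deriv Φ) 0).re) ∧
      ContinuousOn (fun θ => (Φ θ).re) (Set.Icc (-π) π) ∧
      (∀ θ, (Φ (-θ)).re = (Φ θ).re) ∧
      StrictMonoOn (fun θ => (Φ θ).re) (Set.Icc 0 π) := by
  intro Δ z Φ
  let q : ℝ := (t + (s - d) + √Δ) / t
  have hΔ : 0 < Δ := discr_pos_of_parab_lt h1 h2
  have hzq : IsCriticalPair t s d z q := isCriticalPair_of_sq_eq ht.ne' (sq_sqrt hΔ.le)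
  have hz : z ∈ Set.Ioo 0 2 := hzq.mem_Ioo (abs_lt_of_parab_lt h1 h2) h2
  have hz_abs : |z| < 2 := (abs_of_pos hz.1).trans_lt hz.2
  have hz_lt : z < q := div_lt_div_of_pos_right (by linarith [sqrt_pos.2 hΔ]) ht
  have hΦ : Φ = fun θ => leftExponent t s d (circleMap 0 z θ) := by
    simp only [Φ, leftExponent, circleMap_zero]
  clear_value Φ
  subst hΦ
  refine ⟨hΔ, hz, hzq.deriv_leftExponent_circleMap hz, ?_,
    (continuous_re_leftExponent_circleMap hz_abs).continuousOn,
    re_leftExponent_circleMap_neg t s d z,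
    strictMonoOn_re_leftExponent_circleMap ht.le hz (hzq.mul_two_sub_sq_add_pos ht hz.2 hz_lt)⟩
  rw [hzq.deriv_deriv_leftExponent_circleMap hz]
  refine ⟨Complex.ofReal_im _, ?_⟩
  rw [Complex.ofReal_re]
  exact div_pos (mul_pos (mul_pos ht hz.1) (sub_pos.2 hz_lt)) (mul_pos two_pos (sub_pos.2 hz.2))
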